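/- arXiv:2605.05782 — 3 statements merged into one kernel-verified Lean document; each statement's English description precedes it below -/
import Mathlib

section
/- Let V₁, V₂ be finite-dimensional complex vector spaces with nilpotent endomorphisms N₁, N₂ respectively, let u ∈ V₁, v ∈ V₂, and let α, β be real numbers with α > -1 and β > -1. Then the V₁⊗V₂-valued function x ↦ (x^{α-N₁}u) ⊗ ((1-x)^{β-N₂}v) is integrable on (0,1) and ∫₀¹ (x^{α-N₁}u) ⊗ ((1-x)^{β-N₂}v) dx = Σ_{i,j≥0} (1/(i!j!)) B^{i,j}(α,β) · ((-N₁)^i u) ⊗ ((-N₂)^j v), where the sum is finite and B^{i,j}(α,β) := ∫₀¹ x^α (log x)^i (1-x)^β (log(1-x))^j dx. -/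
/-!
Since `N₁` and `N₂` are nilpotent, both vector-valued powers are finite sums, so by bilinearity of
`⊗` the integrand is a finite sum of scalar functions `x^α (log x)^i (1-x)^β (log (1-x))^j / (i! j!)`
times constant vectors (`apply_tpowEnd_tmul_eq_sum`). Both claims thus reduce to the
integrability of these scalar functions on `(0,1)` (`integrableOn_betaLog`). For the latter, a power
of `log x` is dominated near `0` by any negative power of `x`, so lowering the exponents `α`, `β`
slightly, while keeping them above `-1`, absorbs the logarithms
(`exists_rpow_mul_abs_log_pow_le`) and leaves the integrand of a convergent Beta integral.
-/

open MeasureTheory TensorProduct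

/-- `t^{α-N} u := Σ_k t^α (log t)^k (-N)^k u / k!`, for a (nilpotent) endomorphism `N`
of a complex vector space `V`, `u ∈ V`, `α ∈ ℂ` and `t > 0` (a finite sum when `N` is
nilpotent; `t^α` is the principal complex power of the positive real `t`). -/
noncomputable def tpowEnd {V : Type*} [NormedAddCommGroup V] [NormedSpace ℂ V]
    (N : Module.End ℂ V) (α : ℂ) (u : V) (t : ℝ) : V :=
  ∑' k : ℕ, (((t : ℂ) ^ α * (Real.log t : ℂ) ^ k / (Nat.factorial k : ℂ))) • ((-N) ^ k) u

/-- On `(0,1]`, powers of the logarithm are absorbed by an arbitrarily small loss in the exponent. -/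
theorem exists_rpow_mul_abs_log_pow_le (α γ : ℝ) (h : γ < α) (i : ℕ) :
    ∃ C : ℝ, 0 ≤ C ∧ ∀ x : ℝ, 0 < x → x ≤ 1 → x ^ α * |Real.log x| ^ i ≤ C * x ^ γ := by
  -- `t * i ≤ α - γ`, so each of the `i` logarithms can be paired with its own factor `x ^ t`.
  set t : ℝ := (α - γ) / (i + 1) with ht
  have hi : (0 : ℝ) < i + 1 := by positivity
  have ht0 : 0 < t := div_pos (by linarith) hi
  have hti : t * (i + 1) = α - γ := by rw [ht]; field_simp
  refine ⟨(1 / t) ^ i, by positivity, fun x hx hx1 => ?_⟩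
  have h1 : x ^ α ≤ x ^ γ * (x ^ t) ^ i := by
    rw [← Real.rpow_natCast, ← Real.rpow_mul hx.le, ← Real.rpow_add hx]
    exact Real.rpow_le_rpow_of_exponent_ge hx hx1 (by nlinarith)
  have h2 : (x ^ t) ^ i * |Real.log x| ^ i ≤ (1 / t) ^ i := by
    rw [← mul_pow]
    refine pow_le_pow_left₀ (by positivity) ?_ i
    have h3 := (Real.abs_log_mul_self_rpow_lt x t hx hx1 ht0).le
    rwa [abs_mul, abs_of_pos (Real.rpow_pos_of_pos hx t), mul_comm] at h3
  calc x ^ α * |Real.log x| ^ i ≤ x ^ γ * (x ^ t) ^ i * |Real.log x| ^ i := by gcongr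
    _ = x ^ γ * ((x ^ t) ^ i * |Real.log x| ^ i) := by ring
    _ ≤ x ^ γ * (1 / t) ^ i := by gcongr
    _ = _ := mul_comm _ _

theorem integrableOn_rpow_mul_one_sub_rpow (γ δ : ℝ) (hγ : -1 < γ) (hδ : -1 < δ) :
    IntegrableOn (fun x : ℝ => x ^ γ * (1 - x) ^ δ) (Set.Ioo (0 : ℝ) 1) volume := by
  have h := Complex.betaIntegral_convergent (u := ((γ + 1 : ℝ) : ℂ)) (v := ((δ + 1 : ℝ) : ℂ))
    (by rw [Complex.ofReal_re]; linarith) (by rw [Complex.ofReal_re]; linarith)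
  rw [intervalIntegrable_iff_integrableOn_Ioo_of_le zero_le_one] at h
  refine (integrableOn_congr_fun (fun x hx => ?_) measurableSet_Ioo).mp h.norm
  have h1 : (0 : ℝ) < 1 - x := by linarith [hx.2]
  have e1 : ((γ + 1 : ℝ) : ℂ) - 1 = (γ : ℂ) := by push_cast; ring
  have e2 : ((δ + 1 : ℝ) : ℂ) - 1 = (δ : ℂ) := by push_cast; ring
  have e3 : (1 : ℂ) - (x : ℂ) = ((1 - x : ℝ) : ℂ) := by push_cast; ring
  simp only [e1, e2, e3, norm_mul, Complex.norm_cpow_eq_rpow_re_of_pos hx.1,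
    Complex.norm_cpow_eq_rpow_re_of_pos h1, Complex.ofReal_re]

/-- Convergence of the integral defining `B^{i,j}(α,β)`. -/
theorem integrableOn_betaLog (α β : ℝ) (hα : -1 < α) (hβ : -1 < β) (i j : ℕ) :
    IntegrableOn (fun x : ℝ =>
      x ^ α * (Real.log x) ^ i * (1 - x) ^ β * (Real.log (1 - x)) ^ j)
      (Set.Ioo (0 : ℝ) 1) volume := by
  obtain ⟨γ, hγ, hγα⟩ := exists_between hα
  obtain ⟨δ, hδ, hδβ⟩ := exists_between hβ
  obtain ⟨C, hC, hCx⟩ := exists_rpow_mul_abs_log_pow_le α γ hγα i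
  obtain ⟨D, hD, hDx⟩ := exists_rpow_mul_abs_log_pow_le β δ hδβ j
  refine Integrable.mono' ((integrableOn_rpow_mul_one_sub_rpow γ δ hγ hδ).const_mul (C * D))
    (Measurable.aestronglyMeasurable (by fun_prop)) ?_
  refine (ae_restrict_iff' measurableSet_Ioo).mpr (Filter.Eventually.of_forall fun x hx => ?_)
  have hx0 : 0 < x := hx.1
  have hx1 : 0 < 1 - x := by linarith [hx.2]
  have h1 := hCx x hx0 hx.2.le
  have h2 := hDx (1 - x) hx1 (by linarith)
  rw [Real.norm_eq_abs, abs_mul, abs_mul, abs_mul, abs_pow, abs_pow,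
    abs_of_pos (Real.rpow_pos_of_pos hx0 α), abs_of_pos (Real.rpow_pos_of_pos hx1 β)]
  calc x ^ α * |Real.log x| ^ i * (1 - x) ^ β * |Real.log (1 - x)| ^ j
      = (x ^ α * |Real.log x| ^ i) * ((1 - x) ^ β * |Real.log (1 - x)| ^ j) := by ring
    _ ≤ (C * x ^ γ) * (D * (1 - x) ^ δ) := by gcongr
    _ = C * D * (x ^ γ * (1 - x) ^ δ) := by ring

theorem neg_pow_eq_zero_of_le {R : Type*} [Ring R] {N : R} {m k : ℕ} (hm : N ^ m = 0)
    (hk : m ≤ k) : (-N) ^ k = 0 := by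
  rw [neg_pow, pow_eq_zero_of_le hk hm, mul_zero]

/-- For `t > 0` and a real exponent, `t^{α-N} u` is a finite sum with real coefficients. -/
theorem tpowEnd_eq_sum {V : Type*} [NormedAddCommGroup V] [NormedSpace ℂ V]
    {N : Module.End ℂ V} {m : ℕ} (hm : N ^ m = 0) (α : ℝ) (u : V) {t : ℝ} (ht : 0 < t) :
    tpowEnd N (α : ℂ) u t = ∑ k ∈ Finset.range m,
      ((t ^ α * Real.log t ^ k / (Nat.factorial k : ℝ) : ℝ) : ℂ) • ((-N) ^ k) u := by
  unfold tpowEnd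
  rw [tsum_eq_sum (s := Finset.range m)]
  · refine Finset.sum_congr rfl fun k _ => ?_
    push_cast [Complex.ofReal_cpow ht.le]
    rfl
  · intro k hk
    rw [neg_pow_eq_zero_of_le hm (by simpa using hk), LinearMap.zero_apply, smul_zero]

/-- The integrand of `integral_tpowEnd_tmul`, expanded by bilinearity into scalar functions times
constant vectors. -/
theorem apply_tpowEnd_tmul_eq_sum {V₁ V₂ E : Type*}
    [NormedAddCommGroup V₁] [NormedSpace ℂ V₁] [NormedAddCommGroup V₂] [NormedSpace ℂ V₂]
    [NormedAddCommGroup E] [NormedSpace ℂ E]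
    (e : TensorProduct ℂ V₁ V₂ ≃ₗ[ℂ] E) {N₁ : Module.End ℂ V₁} {N₂ : Module.End ℂ V₂}
    {m n : ℕ} (hm : N₁ ^ m = 0) (hn : N₂ ^ n = 0) (u : V₁) (v : V₂) (α β : ℝ)
    {x : ℝ} (hx : x ∈ Set.Ioo (0 : ℝ) 1) :
    e (tpowEnd N₁ (α : ℂ) u x ⊗ₜ[ℂ] tpowEnd N₂ (β : ℂ) v (1 - x)) =
      ∑ p ∈ Finset.range m ×ˢ Finset.range n,
        ((1 / (Nat.factorial p.1 * Nat.factorial p.2 : ℝ)) *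
          (x ^ α * (Real.log x) ^ p.1 * (1 - x) ^ β * (Real.log (1 - x)) ^ p.2)) •
          e (((-N₁) ^ p.1) u ⊗ₜ[ℂ] ((-N₂) ^ p.2) v) := by
  rw [tpowEnd_eq_sum hm α u hx.1, tpowEnd_eq_sum hn β v (sub_pos.mpr hx.2),
    TensorProduct.sum_tmul, map_sum, Finset.sum_product]
  refine Finset.sum_congr rfl fun i _ => ?_
  rw [TensorProduct.tmul_sum, map_sum]
  refine Finset.sum_congr rfl fun j _ => ?_
  rw [TensorProduct.smul_tmul_smul, map_smul, ← Complex.ofReal_mul, Complex.coe_smul]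
  congr 1
  field_simp

/-- **The beta-type integral of `(x^{α-N₁}u) ⊗ ((1-x)^{β-N₂}v)`.**
Let `N₁`, `N₂` be nilpotent endomorphisms of finite-dimensional complex vector spaces
`V₁`, `V₂`, let `u ∈ V₁`, `v ∈ V₂` and let `α > -1`, `β > -1` be real.  Realizing the
tensor product `V₁ ⊗ V₂` as a normed space `E` via a linear equivalence `e`, the
`V₁ ⊗ V₂`-valued function `x ↦ (x^{α-N₁}u) ⊗ ((1-x)^{β-N₂}v)` is integrable on `(0,1)`
and its integral is `Σ_{i,j} (1/(i!j!)) B^{i,j}(α,β) ((-N₁)^i u) ⊗ ((-N₂)^j v)`,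
where `B^{i,j}(α,β) = ∫₀¹ x^α (log x)^i (1-x)^β (log(1-x))^j dx` (the sum is finite). -/
theorem integral_tpowEnd_tmul {V₁ V₂ E : Type*}
    [NormedAddCommGroup V₁] [NormedSpace ℂ V₁] [FiniteDimensional ℂ V₁]
    [NormedAddCommGroup V₂] [NormedSpace ℂ V₂] [FiniteDimensional ℂ V₂]
    [NormedAddCommGroup E] [NormedSpace ℂ E]
    (e : TensorProduct ℂ V₁ V₂ ≃ₗ[ℂ] E)
    (N₁ : Module.End ℂ V₁) (N₂ : Module.End ℂ V₂)
    (hN₁ : IsNilpotent N₁) (hN₂ : IsNilpotent N₂)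
    (u : V₁) (v : V₂) (α β : ℝ) (hα : -1 < α) (hβ : -1 < β) :
    IntegrableOn
        (fun x : ℝ => e (tpowEnd N₁ (α : ℂ) u x ⊗ₜ[ℂ] tpowEnd N₂ (β : ℂ) v (1 - x)))
        (Set.Ioo (0 : ℝ) 1) volume ∧
    ∫ x in Set.Ioo (0 : ℝ) 1,
        e (tpowEnd N₁ (α : ℂ) u x ⊗ₜ[ℂ] tpowEnd N₂ (β : ℂ) v (1 - x)) =
      ∑' p : ℕ × ℕ,
        ((1 / (Nat.factorial p.1 * Nat.factorial p.2 : ℝ)) *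
            ∫ x in (0 : ℝ)..1,
              x ^ α * (Real.log x) ^ p.1 * (1 - x) ^ β * (Real.log (1 - x)) ^ p.2) •
          e (((-N₁) ^ p.1) u ⊗ₜ[ℂ] ((-N₂) ^ p.2) v) := by
  obtain ⟨m, hm⟩ := hN₁
  obtain ⟨n, hn⟩ := hN₂
  -- The Bochner integral on `E` takes its intended value only because `E` is complete.
  have : FiniteDimensional ℂ E := Module.Finite.equiv e
  have : CompleteSpace E := FiniteDimensional.complete ℂ E
  have hterm : ∀ p ∈ Finset.range m ×ˢ Finset.range n, IntegrableOn (fun x : ℝ =>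
      ((1 / (Nat.factorial p.1 * Nat.factorial p.2 : ℝ)) *
        (x ^ α * (Real.log x) ^ p.1 * (1 - x) ^ β * (Real.log (1 - x)) ^ p.2)) •
        e (((-N₁) ^ p.1) u ⊗ₜ[ℂ] ((-N₂) ^ p.2) v)) (Set.Ioo (0 : ℝ) 1) volume := fun p _ =>
    ((integrableOn_betaLog α β hα hβ p.1 p.2).const_mul _).smul_const _
  have hexp : Set.EqOn
      (fun x : ℝ => e (tpowEnd N₁ (α : ℂ) u x ⊗ₜ[ℂ] tpowEnd N₂ (β : ℂ) v (1 - x))) _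
      (Set.Ioo (0 : ℝ) 1) := fun x hx => apply_tpowEnd_tmul_eq_sum e hm hn u v α β hx
  refine ⟨(integrableOn_congr_fun hexp measurableSet_Ioo).mpr (integrable_finsetSum _ hterm), ?_⟩
  rw [setIntegral_congr_fun measurableSet_Ioo hexp, integral_finsetSum _ hterm,
    tsum_eq_sum (s := Finset.range m ×ˢ Finset.range n)]
  · refine Finset.sum_congr rfl fun p _ => ?_
    rw [integral_smul_const, integral_const_mul, intervalIntegral.integral_of_le zero_le_one,
      integral_Ioc_eq_integral_Ioo]
  · intro p hp
    rw [Finset.mem_product, Finset.mem_range, Finset.mem_range, not_and_or, not_lt, not_lt] at hp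
    rcases hp with h | h
    · rw [neg_pow_eq_zero_of_le hm h, LinearMap.zero_apply, TensorProduct.zero_tmul, map_zero,
        smul_zero]
    · rw [neg_pow_eq_zero_of_le hn h, LinearMap.zero_apply, TensorProduct.tmul_zero, map_zero,
        smul_zero]
end

section
/- Let V₁, V₂ be finite-dimensional complex vector spaces with nilpotent endomorphisms N₁, N₂ respectively, and let α, β be real numbers with α > -1 and β > -1. Then the endomorphism B_{α-N₁,β-N₂} := Σ_{i,j≥0} (1/(i!j!)) B^{i,j}(α,β) · ((-N₁)^i ⊗ (-N₂)^j) of V₁⊗V₂ (a finite sum) is invertible; moreover, if in addition α + β > -1, then the composite ((α+β+1)·id - (N₁⊗id + id⊗N₂)) ∘ B_{α-N₁,β-N₂} is also invertible. -/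
/-!
All operators in sight are polynomials in the commuting nilpotents `N₁ ⊗ id` and `id ⊗ N₂`. The
constant coefficient of `B_{α-N₁,β-N₂}` is the beta integral `∫₀¹ x^α (1-x)^β dx`, which is positive
for `α, β > -1` because its integrand is integrable and positive on `(0, 1)`; each of the remaining
terms is nilpotent and they all commute, so the operator is a nonzero scalar plus a nilpotent, hence
invertible. The prefactor `(α+β+1) - N` is likewise a nonzero scalar minus a nilpotent when
`α + β > -1`.

If `k₁ = 0` or `k₂ = 0` the sum defining the operator is empty, but then `V₁` or `V₂` is zero, and
every endomorphism of `V₁ ⊗ V₂` is invertible.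
-/

open MeasureTheory

/-- The operator `B_{α-N₁,β-N₂} = Σ_{i<k₁, j<k₂} (1/(i!j!)) B^{i,j}(α,β) ((-N₁)^i ⊗ (-N₂)^j)`
on `V₁ ⊗ V₂`, where `B^{i,j}(α,β) = ∫₀¹ x^α (log x)^i (1-x)^β (log(1-x))^j dx`
(a finite sum: all further terms vanish when `N₁^{k₁} = 0` and `N₂^{k₂} = 0`). -/
noncomputable def betaOp {V₁ V₂ : Type*} [AddCommGroup V₁] [Module ℂ V₁]
    [AddCommGroup V₂] [Module ℂ V₂]
    (N₁ : Module.End ℂ V₁) (N₂ : Module.End ℂ V₂) (k₁ k₂ : ℕ) (α β : ℝ) :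
    Module.End ℂ (TensorProduct ℂ V₁ V₂) :=
  ∑ i ∈ Finset.range k₁, ∑ j ∈ Finset.range k₂,
    (((1 / (Nat.factorial i * Nat.factorial j : ℝ)) *
        ∫ x in (0 : ℝ)..1,
          x ^ α * (Real.log x) ^ i * (1 - x) ^ β * (Real.log (1 - x)) ^ j : ℝ) : ℂ) •
      TensorProduct.map ((-N₁) ^ i) ((-N₂) ^ j)

/-- The hypothesis on `α`, `β` is what makes the integral convergent; otherwise it would be `0`
by convention. -/
lemma beta_integral_pos {α β : ℝ} (hα : -1 < α) (hβ : -1 < β) :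
    0 < ∫ x in (0 : ℝ)..1, x ^ α * (1 - x) ^ β := by
  refine intervalIntegral.intervalIntegral_pos_of_pos_on ?_ ?_ one_pos
  · have h := Complex.betaIntegral_convergent (u := ((α + 1 : ℝ) : ℂ)) (v := ((β + 1 : ℝ) : ℂ))
      (by rw [Complex.ofReal_re]; linarith) (by rw [Complex.ofReal_re]; linarith)
    rw [intervalIntegrable_iff_integrableOn_Ioc_of_le zero_le_one] at h ⊢
    -- the real integrand is the real part of the complex one
    refine MeasureTheory.IntegrableOn.congr_fun (Integrable.re h) ?_ measurableSet_Ioc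
    intro x hx
    have h1 : (((x : ℂ) ^ (((α + 1 : ℝ) : ℂ) - 1)) * (1 - (x : ℂ)) ^ (((β + 1 : ℝ) : ℂ) - 1)) =
        ((x ^ α * (1 - x) ^ β : ℝ) : ℂ) := by
      rw [Complex.ofReal_mul, Complex.ofReal_cpow hx.1.le,
        Complex.ofReal_cpow (sub_nonneg.2 hx.2)]
      push_cast
      simp
    simp only [h1]
    exact RCLike.ofReal_re (K := ℂ) _
  · intro x hx
    exact mul_pos (Real.rpow_pos_of_pos hx.1 _) (Real.rpow_pos_of_pos (sub_pos.2 hx.2) _)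

lemma isUnit_smul_one_add {A : Type*} [Ring A] [Algebra ℂ A] {c : ℂ} (hc : c ≠ 0) {a : A}
    (ha : IsNilpotent a) : IsUnit (c • (1 : A) + a) := by
  refine ha.isUnit_add_left_of_commute ?_ ((Commute.one_right a).smul_right c)
  rw [← Algebra.algebraMap_eq_smul_one]
  exact (IsUnit.mk0 c hc).map (algebraMap ℂ A)

/-- A finite polynomial expression in two commuting nilpotents is invertible as soon as its constant
coefficient is nonzero. -/
lemma isUnit_sum_smul_pow_mul_pow {A : Type*} [Ring A] [Algebra ℂ A] {a b : A} (hab : Commute a b)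
    (ha : IsNilpotent a) (hb : IsNilpotent b) (k₁ k₂ : ℕ) (hk₁ : 0 < k₁) (hk₂ : 0 < k₂)
    (c : ℕ → ℕ → ℂ) (hc : c 0 0 ≠ 0) :
    IsUnit (∑ i ∈ Finset.range k₁, ∑ j ∈ Finset.range k₂, c i j • (a ^ i * b ^ j)) := by
  rw [← Finset.sum_product',
    ← Finset.add_sum_erase _ _ (a := ((0, 0) : ℕ × ℕ)) (by simp [hk₁, hk₂])]
  have hcomm : ∀ i j k l : ℕ, Commute (a ^ i * b ^ j) (a ^ k * b ^ l) := fun i j k l =>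
    (((Commute.refl a).pow_pow i k).mul_right (hab.pow_pow i l)).mul_left
      ((hab.symm.pow_pow j k).mul_right ((Commute.refl b).pow_pow j l))
  simp only [pow_zero, mul_one]
  refine isUnit_smul_one_add hc (Commute.isNilpotent_sum ?_ ?_)
  · rintro ⟨i, j⟩ hij
    refine IsNilpotent.smul ?_ _
    have hne : i ≠ 0 ∨ j ≠ 0 := by
      by_contra! h
      exact (Finset.mem_erase.1 hij).1 (Prod.ext h.1 h.2)
    rcases hne with h | h
    · exact (hab.pow_pow i j).isNilpotent_mul_right (ha.pow_of_pos h)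
    · exact (hab.pow_pow i j).isNilpotent_mul_left (hb.pow_of_pos h)
  · rintro ⟨i, j⟩ ⟨k, l⟩ - -
    exact ((hcomm i j k l).smul_left _).smul_right _

/-- **Invertibility of the twisting operator `B̃`.**
For nilpotent endomorphisms `N₁`, `N₂` of finite-dimensional complex vector spaces and
real `α > -1`, `β > -1`, the (finite-sum) operator
`B_{α-N₁,β-N₂} = Σ_{i,j} (1/(i!j!)) B^{i,j}(α,β) ((-N₁)^i ⊗ (-N₂)^j)` of `V₁ ⊗ V₂` is
invertible; if moreover `α + β > -1`, then
`((α+β+1)·id - (N₁⊗id + id⊗N₂)) ∘ B_{α-N₁,β-N₂}` is invertible as well. -/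
theorem betaOp_isUnit {V₁ V₂ : Type*}
    [AddCommGroup V₁] [Module ℂ V₁] [FiniteDimensional ℂ V₁]
    [AddCommGroup V₂] [Module ℂ V₂] [FiniteDimensional ℂ V₂]
    (N₁ : Module.End ℂ V₁) (N₂ : Module.End ℂ V₂) (k₁ k₂ : ℕ)
    (hN₁ : N₁ ^ k₁ = 0) (hN₂ : N₂ ^ k₂ = 0)
    (α β : ℝ) (hα : -1 < α) (hβ : -1 < β) :
    IsUnit (betaOp N₁ N₂ k₁ k₂ α β) ∧
      (-1 < α + β →
        IsUnit
          ((((α + β + 1 : ℝ) : ℂ) • (1 : Module.End ℂ (TensorProduct ℂ V₁ V₂)) -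
              (TensorProduct.map N₁ 1 + TensorProduct.map 1 N₂)) *
            betaOp N₁ N₂ k₁ k₂ α β)) := by
  have hM₁ : IsNilpotent (TensorProduct.map N₁ (1 : Module.End ℂ V₂)) :=
    ⟨k₁, by rw [TensorProduct.map_pow, hN₁, TensorProduct.map_zero_left]⟩
  have hM₂ : IsNilpotent (TensorProduct.map (1 : Module.End ℂ V₁) N₂) :=
    ⟨k₂, by rw [TensorProduct.map_pow, hN₂, TensorProduct.map_zero_right]⟩
  have hcomm : ∀ (f : Module.End ℂ V₁) (g : Module.End ℂ V₂),
      Commute (TensorProduct.map f (1 : Module.End ℂ V₂))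
        (TensorProduct.map (1 : Module.End ℂ V₁) g) := fun f g => by
    rw [commute_iff_eq, ← TensorProduct.map_mul, ← TensorProduct.map_mul]
    simp only [mul_one, one_mul]
  have hB : IsUnit (betaOp N₁ N₂ k₁ k₂ α β) := by
    rcases Nat.eq_zero_or_pos k₁ with rfl | hk₁
    · have h : (1 : Module.End ℂ (TensorProduct ℂ V₁ V₂)) = 0 := by
        rw [← TensorProduct.map_one, ← pow_zero N₁, hN₁, TensorProduct.map_zero_left]
      have := subsingleton_of_zero_eq_one h.symm
      exact isUnit_of_subsingleton _
    rcases Nat.eq_zero_or_pos k₂ with rfl | hk₂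
    · have h : (1 : Module.End ℂ (TensorProduct ℂ V₁ V₂)) = 0 := by
        rw [← TensorProduct.map_one, ← pow_zero N₂, hN₂, TensorProduct.map_zero_right]
      have := subsingleton_of_zero_eq_one h.symm
      exact isUnit_of_subsingleton _
    have hmap : ∀ i j : ℕ, TensorProduct.map ((-N₁) ^ i) ((-N₂) ^ j) =
        TensorProduct.map (-N₁) (1 : Module.End ℂ V₂) ^ i *
          TensorProduct.map (1 : Module.End ℂ V₁) (-N₂) ^ j := fun i j => by
      rw [TensorProduct.map_pow, TensorProduct.map_pow, ← TensorProduct.map_mul, one_pow, one_pow,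
        mul_one, one_mul]
    unfold betaOp
    simp only [hmap]
    refine isUnit_sum_smul_pow_mul_pow (hcomm _ _) ⟨k₁, ?_⟩ ⟨k₂, ?_⟩ k₁ k₂ hk₁ hk₂
      (fun i j => (((1 / (Nat.factorial i * Nat.factorial j : ℝ)) *
        ∫ x in (0 : ℝ)..1,
          x ^ α * (Real.log x) ^ i * (1 - x) ^ β * (Real.log (1 - x)) ^ j : ℝ) : ℂ)) ?_
    · rw [TensorProduct.map_pow, neg_pow, hN₁, mul_zero, TensorProduct.map_zero_left]
    · rw [TensorProduct.map_pow, neg_pow, hN₂, mul_zero, TensorProduct.map_zero_right]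
    · rw [Complex.ofReal_ne_zero]
      simpa using (beta_integral_pos hα hβ).ne'
  refine ⟨hB, fun hαβ => IsUnit.mul ?_ hB⟩
  rw [sub_eq_add_neg]
  refine isUnit_smul_one_add ?_ ((hcomm N₁ N₂).isNilpotent_add hM₁ hM₂).neg
  rw [Complex.ofReal_ne_zero]
  linarith
end

section
/- Let P ∈ ℂ[X] be a monic polynomial with distinct roots, all nonzero, let V be a finite-dimensional complex vector space, and let T be an invertible endomorphism of V. Let m_X denote multiplication by X on the quotient ring ℂ[X]/(P). Then the linear map from V ⊗ (ℂ[X]/(P)) to V sending v ⊗ Q to Σ_{α : P(α)=0} Q(α) · v restricts to an injection on Ker(T ⊗ m_X - id), whose image is the (internal direct) sum ⊕_{α : P(α)=0} Ker(T - α^{-1}·id_V). -/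
/-!
Since `P` has simple roots, evaluation at the roots identifies `ℂ[X]/(P)` with `ℂ^{roots}`, the
inverse being given by the Lagrange basis. Tensoring with `V`, an element `z` of `V ⊗ ℂ[X]/(P)` is
the same thing as the family of its components `z(α) ∈ V` (`fiberMap`, `sum_fiberMap_tmul_basis`),
and `T ⊗ m_X` acts on the component at `α` as `α T`. Hence `z` is in the kernel of `T ⊗ m_X - id`
iff every `z(α)` lies in `Ker (T - α⁻¹)` (`mem_ker_iff`). The trace map is `z ↦ ∑ z(α)`; its image
on the kernel is the sum of these eigenspaces, and it is injective there because eigenspaces for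
distinct eigenvalues are independent.
-/


open Polynomial TensorProduct

/-- Multiplication by (the class of) `X` on the quotient ring `ℂ[X]/(P)`. -/
noncomputable def mulXmod (P : ℂ[X]) : Module.End ℂ (ℂ[X] ⧸ Ideal.span {P}) :=
  LinearMap.mulLeft ℂ (Ideal.Quotient.mk (Ideal.span {P}) Polynomial.X)

/-- Evaluation at `α` as a linear functional on `ℂ[X]/(P)`; by convention it is `0` when `α` is not
a root of `P`, where evaluation does not descend to the quotient. -/
noncomputable def evalMod (P : ℂ[X]) (α : ℂ) : (ℂ[X] ⧸ Ideal.span {P}) →ₗ[ℂ] ℂ :=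
  open Classical in
  if h : P.eval α = 0 then
    (Ideal.Quotient.liftₐ (Ideal.span {P}) (Polynomial.aeval α) (fun a ha => by
      obtain ⟨b, rfl⟩ := Ideal.mem_span_singleton.1 ha
      simp [Polynomial.aeval_def, h])).toLinearMap
  else 0

lemma evalMod_mk {P : ℂ[X]} {α : ℂ} (h : P.eval α = 0) (Q : ℂ[X]) :
    evalMod P α (Ideal.Quotient.mk _ Q) = Q.eval α := by
  rw [evalMod, dif_pos h]
  exact Polynomial.coe_aeval_eq_eval α ▸ rfl

/-- The component at `α` of an element of `V ⊗ ℂ[X]/(P)`, that is the map `v ⊗ Q ↦ Q(α) v`. -/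
noncomputable def fiberMap (V : Type*) [AddCommGroup V] [Module ℂ V] (P : ℂ[X]) (α : ℂ) :
    TensorProduct ℂ V (ℂ[X] ⧸ Ideal.span {P}) →ₗ[ℂ] V :=
  (TensorProduct.rid ℂ V).toLinearMap ∘ₗ (evalMod P α).lTensor V

section

variable {V : Type*} [AddCommGroup V] [Module ℂ V] {P : ℂ[X]}

lemma fiberMap_tmul {α : ℂ} (h : P.eval α = 0) (v : V) (Q : ℂ[X]) :
    fiberMap V P α (v ⊗ₜ[ℂ] Ideal.Quotient.mk _ Q) = Q.eval α • v := by
  simp [fiberMap, evalMod_mk h]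

lemma eval_eq_zero_of_mem {α : ℂ} (h : α ∈ P.roots.toFinset) : P.eval α = 0 :=
  (Polynomial.mem_roots'.1 (Multiset.mem_toFinset.1 h)).2

lemma fiberMap_map {α : ℂ} (h : P.eval α = 0) (T : Module.End ℂ V)
    (z : TensorProduct ℂ V (ℂ[X] ⧸ Ideal.span {P})) :
    fiberMap V P α (TensorProduct.map T (mulXmod P) z) = α • T (fiberMap V P α z) := by
  induction z with
  | zero => simp
  | add x y hx hy => simp only [map_add, hx, hy, smul_add]
  | tmul v q =>
    obtain ⟨Q, rfl⟩ := Ideal.Quotient.mk_surjective q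
    rw [TensorProduct.map_tmul, mulXmod, LinearMap.mulLeft_apply, ← map_mul, fiberMap_tmul h,
      fiberMap_tmul h, map_smul, smul_smul]
    simp

/-- Lagrange interpolation modulo `P`: the difference of the two sides vanishes at all roots of `P`,
which are simple, so it is divisible by `P`. -/
lemma mk_eq_sum_basis (hmonic : P.Monic) (hroots : P.roots.Nodup) (Q : ℂ[X]) :
    Ideal.Quotient.mk (Ideal.span {P}) Q = ∑ α ∈ P.roots.toFinset,
      Q.eval α • Ideal.Quotient.mk (Ideal.span {P}) (Lagrange.basis P.roots.toFinset id α) := by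
  have key : P ∣ Q - Lagrange.interpolate P.roots.toFinset id (fun α => Q.eval α) := by
    by_cases hD : Q - Lagrange.interpolate P.roots.toFinset id (fun α => Q.eval α) = 0
    · rw [hD]; exact dvd_zero _
    refine (IsAlgClosed.splits P).dvd_of_roots_le_roots hmonic.ne_zero ?_
    refine (Multiset.le_iff_subset hroots).2 fun α hα => ?_
    have := Lagrange.eval_interpolate_at_node (v := id) (fun α => Q.eval α)
      (Set.injOn_id _) (Multiset.mem_toFinset.2 hα)
    rw [Polynomial.mem_roots hD, Polynomial.IsRoot.def, Polynomial.eval_sub, sub_eq_zero]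
    exact this.symm
  rw [(Ideal.Quotient.mk_eq_mk_iff_sub_mem _ _).2 (Ideal.mem_span_singleton.2 key),
    Lagrange.interpolate_apply, map_sum]
  refine Finset.sum_congr rfl fun α _ => ?_
  rw [← Polynomial.smul_eq_C_mul]
  rfl

/-- An element of `V ⊗ ℂ[X]/(P)` is recovered from its components. -/
lemma sum_fiberMap_tmul_basis (hmonic : P.Monic) (hroots : P.roots.Nodup)
    (z : TensorProduct ℂ V (ℂ[X] ⧸ Ideal.span {P})) :
    ∑ α ∈ P.roots.toFinset, fiberMap V P α z ⊗ₜ[ℂ]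
      Ideal.Quotient.mk (Ideal.span {P}) (Lagrange.basis P.roots.toFinset id α) = z := by
  induction z with
  | zero => simp
  | add x y hx hy =>
    simp only [map_add, TensorProduct.add_tmul, Finset.sum_add_distrib, hx, hy]
  | tmul v q =>
    obtain ⟨Q, rfl⟩ := Ideal.Quotient.mk_surjective q
    conv_rhs => rw [mk_eq_sum_basis hmonic hroots Q, TensorProduct.tmul_sum]
    refine Finset.sum_congr rfl fun α hα => ?_
    rw [fiberMap_tmul (eval_eq_zero_of_mem hα), TensorProduct.smul_tmul]

lemma ext_fiberMap (hmonic : P.Monic) (hroots : P.roots.Nodup)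
    {x y : TensorProduct ℂ V (ℂ[X] ⧸ Ideal.span {P})}
    (h : ∀ α ∈ P.roots.toFinset, fiberMap V P α x = fiberMap V P α y) : x = y := by
  rw [← sum_fiberMap_tmul_basis hmonic hroots x, ← sum_fiberMap_tmul_basis hmonic hroots y]
  exact Finset.sum_congr rfl fun α hα => by rw [h α hα]

/-- The equation `(T ⊗ m_X) z = z` is checked component by component, where it reads
`α T z(α) = z(α)`. -/
lemma mem_ker_iff (hmonic : P.Monic) (hroots : P.roots.Nodup) (h0 : P.eval 0 ≠ 0)
    (T : Module.End ℂ V) (z : TensorProduct ℂ V (ℂ[X] ⧸ Ideal.span {P})) :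
    z ∈ LinearMap.ker (TensorProduct.map T (mulXmod P) - LinearMap.id) ↔
      ∀ α ∈ P.roots.toFinset,
        fiberMap V P α z ∈ LinearMap.ker (T - (α⁻¹ : ℂ) • (1 : Module.End ℂ V)) := by
  have hcomp : ∀ α ∈ P.roots.toFinset,
      (fiberMap V P α z ∈ LinearMap.ker (T - (α⁻¹ : ℂ) • (1 : Module.End ℂ V)) ↔
        fiberMap V P α (TensorProduct.map T (mulXmod P) z) = fiberMap V P α z) := by
    intro α hα
    have hα0 : α ≠ 0 := by
      rintro rfl
      exact h0 (eval_eq_zero_of_mem hα)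
    rw [fiberMap_map (eval_eq_zero_of_mem hα), LinearMap.mem_ker, LinearMap.sub_apply, sub_eq_zero,
      LinearMap.smul_apply, Module.End.one_apply, eq_inv_smul_iff₀ hα0]
  rw [LinearMap.mem_ker, LinearMap.sub_apply, sub_eq_zero, LinearMap.id_apply]
  exact ⟨fun h α hα => (hcomp α hα).2 (by rw [h]),
    fun h => ext_fiberMap hmonic hroots fun α hα => (hcomp α hα).1 (h α hα)⟩

lemma fiberMap_tmul_basis {α β : ℂ} (hα : α ∈ P.roots.toFinset) (hβ : β ∈ P.roots.toFinset)
    (w : V) :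
    fiberMap V P β (w ⊗ₜ[ℂ] Ideal.Quotient.mk (Ideal.span {P})
      (Lagrange.basis P.roots.toFinset id α)) = if α = β then w else 0 := by
  rw [fiberMap_tmul (eval_eq_zero_of_mem hβ)]
  split_ifs with h
  · subst h
    have := Lagrange.eval_basis_self (v := id) (Set.injOn_id _) hα
    simp only [id] at this
    rw [this, one_smul]
  · have := Lagrange.eval_basis_of_ne (v := id) h hβ
    simp only [id] at this
    rw [this, zero_smul]

end

/-- **Semisimple part of the nearby-cycle linear algebra.**
Let `P ∈ ℂ[X]` be monic with distinct and nonzero roots, `V` a finite-dimensional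
complex vector space and `T` an invertible endomorphism of `V`.  The linear map
`V ⊗ ℂ[X]/(P) → V`, `v ⊗ Q ↦ (Σ_{P(α)=0} Q(α)) • v`, restricts to an injection on
`Ker(T ⊗ m_X - id)` whose image is the (internal direct) sum
`⊕_{P(α)=0} Ker (T - α⁻¹·id)`. -/
theorem ker_semisimple_tensor {V : Type*} [AddCommGroup V] [Module ℂ V]
    [FiniteDimensional ℂ V] (P : ℂ[X]) (hmonic : P.Monic) (hroots : P.roots.Nodup)
    (h0 : P.eval 0 ≠ 0) (T : Module.End ℂ V) (hT : IsUnit T) :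
    ∃ Φ : TensorProduct ℂ V (ℂ[X] ⧸ Ideal.span {P}) →ₗ[ℂ] V,
      (∀ (v : V) (Q : ℂ[X]),
          Φ (v ⊗ₜ[ℂ] Ideal.Quotient.mk (Ideal.span {P}) Q) =
            (∑ α ∈ P.roots.toFinset, Q.eval α) • v) ∧
      Set.InjOn (⇑Φ)
        ((LinearMap.ker (TensorProduct.map T (mulXmod P) - LinearMap.id) :
          Submodule ℂ _) : Set _) ∧
      Submodule.map Φ (LinearMap.ker (TensorProduct.map T (mulXmod P) - LinearMap.id)) =
        ⨆ α ∈ P.roots.toFinset,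
          LinearMap.ker (T - (α⁻¹ : ℂ) • (1 : Module.End ℂ V)) := by
  refine ⟨∑ α ∈ P.roots.toFinset, fiberMap V P α, fun v Q => ?_, ?_, le_antisymm ?_ ?_⟩
  · rw [LinearMap.sum_apply, Finset.sum_smul]
    exact Finset.sum_congr rfl fun α hα => fiberMap_tmul (eval_eq_zero_of_mem hα) v Q
  · -- By linearity, consider `z` in the kernel with `∑ z(α) = 0`; the `z(α)` are in independent
    -- eigenspaces, hence all vanish.
    have hind : iSupIndep fun α : ℂ => LinearMap.ker (T - (α⁻¹ : ℂ) • (1 : Module.End ℂ V)) := by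
      have := (Module.End.eigenspaces_iSupIndep T).comp (inv_injective (G := ℂ))
      simpa only [Function.comp_def, Module.End.eigenspace_def, Algebra.algebraMap_eq_smul_one]
        using this
    intro x hx y hy hxy
    rw [SetLike.mem_coe] at hx hy
    have hz := (mem_ker_iff hmonic hroots h0 T _).1 (sub_mem hx hy)
    refine ext_fiberMap hmonic hroots fun α hα => ?_
    rw [← sub_eq_zero, ← map_sub]
    refine (iSupIndep_iff_finsetSum_eq_zero_imp_eq_zero _).1 hind _ _ hz ?_ α hα
    rw [← LinearMap.sum_apply, map_sub, sub_eq_zero, hxy]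
  · rintro _ ⟨z, hz, rfl⟩
    rw [LinearMap.sum_apply]
    exact Submodule.sum_mem_biSup fun α hα => (mem_ker_iff hmonic hroots h0 T z).1 hz α hα
  · -- An eigenvector `w` at `α` is the image of `w ⊗ e_α`, with `e_α` the Lagrange basis polynomial.
    refine iSup₂_le fun α hα w hw => ?_
    refine ⟨w ⊗ₜ[ℂ] Ideal.Quotient.mk _ (Lagrange.basis P.roots.toFinset id α), ?_, ?_⟩
    · refine (mem_ker_iff hmonic hroots h0 T _).2 fun β hβ => ?_
      rw [fiberMap_tmul_basis hα hβ]
      split_ifs with h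
      · exact h ▸ hw
      · exact zero_mem _
    · rw [LinearMap.sum_apply, Finset.sum_congr rfl fun β hβ => fiberMap_tmul_basis hα hβ w,
        Finset.sum_ite_eq, if_pos hα]
end
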